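/- Let C be a category with pullbacks and let X be an object of C such that, for every Beck module φ: M → Y in C, the map Hom_C(X, M) → Hom_C(X, Y) given by composition with φ is bijective. Then X is formally unramified: for every Beck torsor γ: Z → Y in C, the map Hom_C(X, Z) → Hom_C(X, Y) given by composition with γ is injective. -/

import Mathlib

open CategoryTheory CategoryTheory.Limits

universe v u

/-- A Beck module over `Y`: an abelian group object in the overcategory `C/Y`,
presented by its underlying morphism `φ : M ⟶ Y`, a unit (zero) section `unit`,
an addition `add` over `Y`, and a negation `neg` over `Y`, satisfying the abelian
group axioms on generalized elements (equivalently, via Yoneda, making it an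
abelian group object of `C/Y`). -/
structure BeckModule {C : Type u} [Category.{v} C] [HasPullbacks C] (Y : C) where
  M : C
  φ : M ⟶ Y
  unit : Y ⟶ M
  unit_φ : unit ≫ φ = 𝟙 Y
  add : pullback φ φ ⟶ M
  add_φ : add ≫ φ = pullback.fst φ φ ≫ φ
  neg : M ⟶ M
  neg_φ : neg ≫ φ = φ
  add_assoc : ∀ {T : C} (a b c : T ⟶ M) (hab : a ≫ φ = b ≫ φ) (hbc : b ≫ φ = c ≫ φ),
    pullback.lift (pullback.lift a b hab ≫ add) c
        (by rw [Category.assoc, add_φ, ← Category.assoc, pullback.lift_fst, hab, hbc]) ≫ add =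
      pullback.lift a (pullback.lift b c hbc ≫ add)
        (by rw [Category.assoc, add_φ, ← Category.assoc, pullback.lift_fst, hab]) ≫ add
  add_comm : ∀ {T : C} (a b : T ⟶ M) (h : a ≫ φ = b ≫ φ),
    pullback.lift a b h ≫ add = pullback.lift b a h.symm ≫ add
  zero_add : ∀ {T : C} (a : T ⟶ M),
    pullback.lift (a ≫ φ ≫ unit) a
        (by rw [Category.assoc, Category.assoc, unit_φ, Category.comp_id]) ≫ add = a
  add_neg : ∀ {T : C} (a : T ⟶ M),
    pullback.lift a (a ≫ neg) (by rw [Category.assoc, neg_φ]) ≫ add = a ≫ φ ≫ unit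

/-- A Beck torsor structure on `γ : Z ⟶ Y`: `γ` is an effective epimorphism, equipped
with a Beck module `mod` over `Y` and a group action `τ : M ×_Y Z ⟶ Z` in `C/Y`
(satisfying the unit and associativity axioms for an action of the group object `M`),
such that the shear morphism `(τ, π_Z) : M ×_Y Z ⟶ Z ×_Y Z` is an isomorphism in `C/Y`. -/
structure BeckTorsor {C : Type u} [Category.{v} C] [HasPullbacks C] {Z Y : C} (γ : Z ⟶ Y) where
  mod : BeckModule Y
  effEpi : EffectiveEpi γ
  τ : pullback mod.φ γ ⟶ Z
  τ_γ : τ ≫ γ = pullback.snd mod.φ γ ≫ γ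
  act_unit : ∀ {T : C} (z : T ⟶ Z),
    pullback.lift (z ≫ γ ≫ mod.unit) z
        (by rw [Category.assoc, Category.assoc, mod.unit_φ, Category.comp_id]) ≫ τ = z
  act_assoc : ∀ {T : C} (a b : T ⟶ mod.M) (z : T ⟶ Z)
      (hab : a ≫ mod.φ = b ≫ mod.φ) (hbz : b ≫ mod.φ = z ≫ γ),
    pullback.lift (pullback.lift a b hab ≫ mod.add) z
        (by rw [Category.assoc, mod.add_φ, ← Category.assoc, pullback.lift_fst, hab, hbz]) ≫ τ =
      pullback.lift a (pullback.lift b z hbz ≫ τ)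
        (by rw [Category.assoc, τ_γ, ← Category.assoc, pullback.lift_snd, hab, hbz]) ≫ τ
  shear_iso : IsIso (pullback.lift τ (pullback.snd mod.φ γ) τ_γ :
    pullback mod.φ γ ⟶ pullback γ γ)

/-- An object `X` is formally unramified if, for every Beck torsor `γ : Z ⟶ Y` in `C`,
the canonical map `Hom(X, Z) → Hom(X, Y)` given by composition with `γ` is injective. -/
def FormallyUnramified {C : Type u} [Category.{v} C] [HasPullbacks C] (X : C) : Prop :=
  ∀ ⦃Z Y : C⦄ (γ : Z ⟶ Y), BeckTorsor γ →
    Function.Injective (fun ψ : X ⟶ Z => ψ ≫ γ)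

/-- If, for every Beck module `φ : M ⟶ Y` in `C`, composition with `φ` is a bijection
`Hom(X, M) → Hom(X, Y)`, then `X` is formally unramified: for every Beck torsor
`γ : Z ⟶ Y` in `C`, composition with `γ` is injective on `Hom(X, Z)`. -/
theorem formallyUnramified_of_beckModule_bijective {C : Type u} [Category.{v} C]
    [HasPullbacks C] (X : C)
    (hX : ∀ ⦃Y : C⦄ (N : BeckModule Y),
      Function.Bijective (fun ψ : X ⟶ N.M => ψ ≫ N.φ)) :
    FormallyUnramified X := by
  intro Z Y γ t p q hpq
  have hpq' : p ≫ γ = q ≫ γ := hpq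
  have := t.shear_iso
  let s := pullback.lift t.τ (pullback.snd t.mod.φ γ) t.τ_γ
  let w : X ⟶ pullback t.mod.φ γ := pullback.lift p q hpq' ≫ inv s
  have hw : w ≫ s = pullback.lift p q hpq' := by simp [w, s]
  have h1 : w ≫ t.τ = p := by
    have := congrArg (fun f => f ≫ pullback.fst γ γ) hw
    dsimp only [s] at this
    rwa [Category.assoc, pullback.lift_fst, pullback.lift_fst] at this
  have h2 : w ≫ pullback.snd t.mod.φ γ = q := by
    have := congrArg (fun f => f ≫ pullback.snd γ γ) hw
    dsimp only [s] at this
    rwa [Category.assoc, pullback.lift_snd, pullback.lift_snd] at this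
  have h3 : w ≫ pullback.fst t.mod.φ γ = q ≫ γ ≫ t.mod.unit := by
    apply (hX t.mod).1
    show (w ≫ pullback.fst t.mod.φ γ) ≫ t.mod.φ = (q ≫ γ ≫ t.mod.unit) ≫ t.mod.φ
    rw [Category.assoc, pullback.condition, ← Category.assoc, h2, Category.assoc,
      Category.assoc, t.mod.unit_φ, Category.comp_id]
  have h4 : w = pullback.lift (q ≫ γ ≫ t.mod.unit) q
      (by rw [Category.assoc, Category.assoc, t.mod.unit_φ, Category.comp_id]) := by
    apply pullback.hom_ext
    · rw [h3, pullback.lift_fst]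
    · rw [h2, pullback.lift_snd]
  rw [← h1, h4]
  exact t.act_unit q
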